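/- Let m ≡ 5 (mod 6) with m ≥ 5 and n = 2^m − 1. For i ∈ {0,1,2}, define T_i = { 1 ≤ j ≤ n−1 : w₂(j) ≡ i (mod 3) }. Then |T_0| = |T_1| = |T_2| = (2^m − 2)/3. -/

import Mathlib

def w2 (x : ℕ) : ℕ := (Nat.digits 2 x).sum

/-!
Writing `1 + x` for the choice of each binary digit gives `∑ j < 2 ^ m, x ^ w2 j = (1 + x) ^ m`.
At a primitive cube root of unity `ω` we have `1 + ω = -ω ^ 2`, so for `m` coprime to `6` the right
side is `-(ω ^ m) ^ 2 = 1 + ω ^ m`. These two terms are exactly the contributions of `j = 0` and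
`j = 2 ^ m - 1`, so the sum of `ω ^ w2 j` over the remaining `j` vanishes. Since the minimal
polynomial of `ω` over `ℚ` is `1 + X + X ^ 2`, the three residue classes have the same size.
-/

section BinaryDigitSum

lemma w2_zero : w2 0 = 0 := by
  simp only [w2, Nat.digits_zero, List.sum_nil]

lemma w2_two_mul (j : ℕ) : w2 (2 * j) = w2 j := by
  rcases j.eq_zero_or_pos with rfl | hj
  · rfl
  · rw [w2, Nat.digits_base_mul one_lt_two hj, List.sum_cons, zero_add, w2]

lemma w2_two_mul_add_one (j : ℕ) : w2 (2 * j + 1) = w2 j + 1 := by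
  rw [w2, add_comm (2 * j), Nat.digits_add 2 one_lt_two 1 j one_lt_two (.inl one_ne_zero),
    List.sum_cons, add_comm, w2]

lemma w2_two_pow_sub_one (m : ℕ) : w2 (2 ^ m - 1) = m := by
  induction m with
  | zero => exact w2_zero
  | succ m ih =>
    have hdouble : 2 ^ (m + 1) - 1 = 2 * (2 ^ m - 1) + 1 := by
      have := Nat.two_pow_pos m
      omega
    rw [hdouble, w2_two_mul_add_one, ih]

lemma sum_range_two_mul {M : Type*} [AddCommMonoid M] (f : ℕ → M) (n : ℕ) :
    ∑ j ∈ Finset.range (2 * n), f j = ∑ j ∈ Finset.range n, (f (2 * j) + f (2 * j + 1)) := by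
  induction n with
  | zero => rfl
  | succ n ih =>
    rw [Nat.mul_succ, Finset.sum_range_succ, Finset.sum_range_succ, ih, Finset.sum_range_succ,
      add_assoc]

variable {R : Type*} [Semiring R]

lemma sum_range_two_pow_pow_w2 (x : R) (m : ℕ) :
    ∑ j ∈ Finset.range (2 ^ m), x ^ w2 j = (1 + x) ^ m := by
  induction m with
  | zero => simp [w2_zero]
  | succ m ih =>
    calc ∑ j ∈ Finset.range (2 ^ (m + 1)), x ^ w2 j
        = ∑ j ∈ Finset.range (2 ^ m), (x ^ w2 j + x ^ (w2 j + 1)) := by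
          simp only [pow_succ' 2 m, sum_range_two_mul, w2_two_mul, w2_two_mul_add_one]
      _ = (∑ j ∈ Finset.range (2 ^ m), x ^ w2 j) * (1 + x) := by
          rw [Finset.sum_mul]
          simp only [mul_one_add, pow_succ]
      _ = (1 + x) ^ (m + 1) := by rw [ih, pow_succ]

lemma one_add_sum_Ico_pow_w2_add_pow (x : R) {m : ℕ} (hm : m ≠ 0) :
    1 + ∑ j ∈ Finset.Ico 1 (2 ^ m - 1), x ^ w2 j + x ^ m = (1 + x) ^ m := by
  have hlast : 2 ^ m - 1 + 1 = 2 ^ m := Nat.sub_add_cancel Nat.one_le_two_pow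
  have hpos : 0 < 2 ^ m - 1 := Nat.sub_pos_of_lt (Nat.one_lt_two_pow hm)
  rw [← sum_range_two_pow_pow_w2, ← hlast, Finset.sum_range_succ, w2_two_pow_sub_one,
    Finset.range_eq_Ico, Finset.sum_eq_sum_Ico_succ_bot hpos, w2_zero, pow_zero, hlast]

end BinaryDigitSum

section RootsOfUnity

lemma sum_pow_eq_sum_card_filter_mod_mul_pow {ι R : Type*} [Semiring R] {x : R} {p : ℕ}
    (hp : 0 < p) (hx : x ^ p = 1) (s : Finset ι) (f : ι → ℕ) :
    ∑ j ∈ s, x ^ f j = ∑ i : Fin p, ((s.filter fun j => f j % p = i).card : R) * x ^ (i : ℕ) := by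
  have hmaps : ∀ j ∈ s, f j % p ∈ Finset.range p :=
    fun j _ => Finset.mem_range.2 (Nat.mod_lt _ hp)
  rw [← Finset.sum_fiberwise_of_maps_to hmaps, Finset.sum_range]
  refine Finset.sum_congr rfl fun i _ => ?_
  have hconst : ∀ j ∈ s.filter (fun j => f j % p = i), x ^ f j = x ^ (i : ℕ) := fun j hj => by
    rw [pow_eq_pow_mod (f j) hx, (Finset.mem_filter.1 hj).2]
  rw [Finset.sum_congr rfl hconst, Finset.sum_const, nsmul_eq_mul]

lemma mul_card_filter_mod_eq_card_of_sum_pow_eq_zero {ι K : Type*} [Field K] [CharZero K]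
    {p : ℕ} (hp : p.Prime) {ζ : K} (hζ : IsPrimitiveRoot ζ p) {s : Finset ι} {f : ι → ℕ}
    (hsum : ∑ j ∈ s, ζ ^ f j = 0) {i : ℕ} (hi : i < p) :
    p * (s.filter fun j => f j % p = i).card = s.card := by
  let c : ℕ → ℕ := fun k => (s.filter fun j => f j % p = k).card
  have hconst : ∀ k ∈ Finset.range p, c k = c i := by
    rw [sum_pow_eq_sum_card_filter_mod_mul_pow hp.pos hζ.pow_eq_one] at hsum
    have heq := (hζ.sum_eq_zero_iff_forall_eq_int hp fun k => (c k : ℤ)).1 (mod_cast hsum)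
    exact fun k hk => mod_cast heq ⟨k, Finset.mem_range.1 hk⟩ ⟨i, hi⟩
  calc p * c i = ∑ k ∈ Finset.range p, c k := by
        rw [Finset.sum_congr rfl hconst, Finset.sum_const, Finset.card_range, smul_eq_mul]
    _ = s.card := (Finset.card_eq_sum_card_fiberwise fun j _ =>
        Finset.mem_coe.2 (Finset.mem_range.2 (Nat.mod_lt (f j) hp.pos))).symm

variable {R : Type*} [CommRing R] [IsDomain R] {ω : R}

lemma one_add_eq_neg_sq_of_isPrimitiveRoot_three (hω : IsPrimitiveRoot ω 3) :
    1 + ω = -ω ^ 2 := by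
  have hgeom := hω.geom_sum_eq_zero (by norm_num)
  rw [Finset.sum_range_succ, Finset.sum_range_succ, Finset.sum_range_one, pow_zero, pow_one]
    at hgeom
  exact eq_neg_of_add_eq_zero_left hgeom

lemma one_add_pow_eq_one_add_pow_of_isPrimitiveRoot_three (hω : IsPrimitiveRoot ω 3) {m : ℕ}
    (hodd : Odd m) (hm : ¬ 3 ∣ m) : (1 + ω) ^ m = 1 + ω ^ m := by
  have hωm : IsPrimitiveRoot (ω ^ m) 3 :=
    hω.pow_of_coprime m ((Nat.prime_three.coprime_iff_not_dvd.2 hm).symm)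
  rw [one_add_eq_neg_sq_of_isPrimitiveRoot_three hω, hodd.neg_pow, pow_right_comm,
    one_add_eq_neg_sq_of_isPrimitiveRoot_three hωm]

end RootsOfUnity

lemma sum_Ico_pow_w2_eq_zero {R : Type*} [CommRing R] [IsDomain R] {ω : R}
    (hω : IsPrimitiveRoot ω 3) {m : ℕ} (hodd : Odd m) (hm : ¬ 3 ∣ m) :
    ∑ j ∈ Finset.Ico 1 (2 ^ m - 1), ω ^ w2 j = 0 := by
  have hsum := one_add_sum_Ico_pow_w2_add_pow ω hodd.pos.ne'
  rw [one_add_pow_eq_one_add_pow_of_isPrimitiveRoot_three hω hodd hm] at hsum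
  linear_combination hsum

theorem stmt12_general (m : ℕ) (hodd : Odd m) (hm : ¬ 3 ∣ m) (n : ℕ) (hn : n = 2 ^ m - 1)
    (i : ℕ) (hi : i < 3) :
    ((Finset.Icc 1 (n - 1)).filter (fun j => w2 j % 3 = i)).card = (2 ^ m - 2) / 3 := by
  have hω : IsPrimitiveRoot (Complex.exp (2 * Real.pi * Complex.I / (3 : ℕ))) 3 :=
    Complex.isPrimitiveRoot_exp 3 three_ne_zero
  have hIcc : Finset.Icc 1 (n - 1) = Finset.Ico 1 (2 ^ m - 1) := by
    ext j
    simp only [Finset.mem_Icc, Finset.mem_Ico]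
    omega
  have hcard := mul_card_filter_mod_eq_card_of_sum_pow_eq_zero Nat.prime_three hω
    (sum_Ico_pow_w2_eq_zero hω hodd hm) hi
  rw [Nat.card_Ico, Nat.sub_sub] at hcard
  rw [hIcc]
  exact Nat.eq_div_of_mul_eq_right three_ne_zero hcard

theorem stmt12 (m : ℕ) (hm : m % 6 = 5) (hm5 : 5 ≤ m) (n : ℕ) (hn : n = 2 ^ m - 1) :
    let T : ℕ → Finset ℕ := fun i => (Finset.Icc 1 (n - 1)).filter (fun j => w2 j % 3 = i)
    (T 0).card = (2 ^ m - 2) / 3 ∧ (T 1).card = (2 ^ m - 2) / 3 ∧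
    (T 2).card = (2 ^ m - 2) / 3 := by
  have hcard := stmt12_general m (Nat.odd_iff.2 (by omega)) (by omega) n hn
  exact ⟨hcard 0 (by norm_num), hcard 1 (by norm_num), hcard 2 (by norm_num)⟩
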